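/- In the frame setting below, assume additionally the Hodge-index property: every D ∈ N with D·H = 0 satisfies D·D ≤ 0. (i) If ch = (x, ch₁, z) with x ≠ 0 is of Bogomolov type, i.e. ch₁·ch₁ − 2xz ≥ 0, then F(ch) ≥ 0 and F(e^L ch) ≥ 0 for every L ∈ N; in particular the point P(ch) = (y₁/x, ((y₁/x)² − F(ch))/2) lies on or below the parabola q = s²/2. (ii) If ch' = (r, ch₁', χ) with r ≠ 0 is of Bogomolov type, i.e. ch₁'·ch₁' − 2rχ ≥ 0, then F'(ch') ≥ 0 and F'(e^L ch') ≥ 0 for every L ∈ N; in particular P'(ch') = (c₁/r, ((c₁/r)² − F'(ch'))/2) lies on or below the parabola q = s²/2. -/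

import Mathlib

/-- The quantity `F(ch)` from Bertram's nested wall lemma. -/
noncomputable def Fval (g δ w x y₁ y₂ z : ℝ) : ℝ :=
  δ / g * (w - y₂ / x) ^ 2
    + 1 / (x ^ 2 * g) * (y₁ ^ 2 * g - y₂ ^ 2 * δ - 2 * x * z)

/-- The quantity `F'(ch')` from Bertram's nested wall lemma. -/
noncomputable def F'val (g δ w r c₁ c₂ χ : ℝ) : ℝ :=
  δ / g * (w - c₂ / r) ^ 2
    + 1 / (r ^ 2 * g) * (c₁ ^ 2 * g - c₂ ^ 2 * δ - 2 * r * χ)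

/-!
The discriminant `ch₁·ch₁ - 2 ch₀ ch₂` is unchanged by `ch ↦ e^L ch`, so the Bogomolov-type
condition passes from `ch` to every twist. In the frame `H, H^⊥` the discriminant of `ch` is the
numerator `y₁²g - y₂²δ - 2xz` of `F(ch)` plus `Δ·Δ`. The Hodge-index property gives `Δ·Δ ≤ 0` and
`δ ≥ 0`, so both summands of `F(ch)` are nonnegative.
-/

section Discriminant

variable {R N : Type*} [CommRing R] [AddCommGroup N] [Module R N]

/-- The Bogomolov discriminant `D·D - 2xz` of the Chern character `(x, D, z)` with respect to the
intersection form `B`. The character is of Bogomolov type when this is nonnegative. -/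
def discriminant (B : N →ₗ[R] N →ₗ[R] R) (x : R) (D : N) (z : R) : R :=
  B D D - 2 * x * z

theorem discriminant_frame {B : N →ₗ[R] N →ₗ[R] R} (hB : ∀ D D', B D D' = B D' D)
    {H Hp Δ : N} (hHHp : B H Hp = 0) (hΔH : B Δ H = 0) (hΔHp : B Δ Hp = 0) (x y₁ y₂ z : R) :
    discriminant B x (y₁ • H + y₂ • Hp + Δ) z =
      y₁ ^ 2 * B H H - y₂ ^ 2 * -B Hp Hp - 2 * x * z + B Δ Δ := by
  simp only [discriminant, map_add, map_smul, LinearMap.add_apply, LinearMap.smul_apply,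
    smul_eq_mul, hB Hp H, hB H Δ, hB Hp Δ, hHHp, hΔH, hΔHp]
  ring

end Discriminant

theorem discriminant_twist {K N : Type*} [Field K] [NeZero (2 : K)] [AddCommGroup N] [Module K N]
    {B : N →ₗ[K] N →ₗ[K] K} (hB : ∀ D D', B D D' = B D' D) (x : K) (D : N) (z : K) (L : N) :
    discriminant B x (D + x • L) (z + B L D + x / 2 * B L L) = discriminant B x D z := by
  simp only [discriminant, map_add, map_smul, LinearMap.add_apply, LinearMap.smul_apply,
    smul_eq_mul, hB D L]
  field_simp
  ring

theorem F'val_eq_Fval : F'val = Fval := rfl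

theorem Fval_nonneg {g δ x y₁ y₂ z : ℝ} (w : ℝ) (hg : 0 ≤ g) (hδ : 0 ≤ δ)
    (hnum : 0 ≤ y₁ ^ 2 * g - y₂ ^ 2 * δ - 2 * x * z) : 0 ≤ Fval g δ w x y₁ y₂ z := by
  unfold Fval
  positivity

section HodgeIndex

variable {N : Type*} [AddCommGroup N] [Module ℝ N] {B : N →ₗ[ℝ] N →ₗ[ℝ] ℝ} {H Hp Δ : N}
  {x y₁ y₂ z : ℝ}

theorem Fval_nonneg_of_discriminant_nonneg (hB : ∀ D D', B D D' = B D' D) (hHHp : B H Hp = 0)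
    (hH : 0 ≤ B H H) (hHodge : ∀ D, B D H = 0 → B D D ≤ 0) (w : ℝ)
    (hΔH : B Δ H = 0) (hΔHp : B Δ Hp = 0)
    (hdisc : 0 ≤ discriminant B x (y₁ • H + y₂ • Hp + Δ) z) :
    0 ≤ Fval (B H H) (-B Hp Hp) w x y₁ y₂ z := by
  have hHp : B Hp Hp ≤ 0 := hHodge Hp ((hB Hp H).trans hHHp)
  have hΔ : B Δ Δ ≤ 0 := hHodge Δ hΔH
  rw [discriminant_frame hB hHHp hΔH hΔHp] at hdisc
  exact Fval_nonneg w hH (neg_nonneg.mpr hHp) (by linarith)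

theorem Fval_twist_nonneg_of_discriminant_nonneg (hB : ∀ D D', B D D' = B D' D)
    (hHHp : B H Hp = 0) (hH : 0 ≤ B H H) (hHodge : ∀ D, B D H = 0 → B D D ≤ 0) (w : ℝ)
    (hΔH : B Δ H = 0) (hΔHp : B Δ Hp = 0)
    (hdisc : 0 ≤ discriminant B x (y₁ • H + y₂ • Hp + Δ) z)
    (l₁ l₂ : ℝ) {ΔL : N} (hΔLH : B ΔL H = 0) (hΔLHp : B ΔL Hp = 0) :
    0 ≤ Fval (B H H) (-B Hp Hp) w x (y₁ + x * l₁) (y₂ + x * l₂)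
      (z + B (l₁ • H + l₂ • Hp + ΔL) (y₁ • H + y₂ • Hp + Δ)
        + x / 2 * B (l₁ • H + l₂ • Hp + ΔL) (l₁ • H + l₂ • Hp + ΔL)) := by
  have twist_frame : (y₁ + x * l₁) • H + (y₂ + x * l₂) • Hp + (Δ + x • ΔL) =
      (y₁ • H + y₂ • Hp + Δ) + x • (l₁ • H + l₂ • Hp + ΔL) := by
    module
  have hΔ'H : B (Δ + x • ΔL) H = 0 := by simp [hΔH, hΔLH]
  have hΔ'Hp : B (Δ + x • ΔL) Hp = 0 := by simp [hΔHp, hΔLHp]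
  apply Fval_nonneg_of_discriminant_nonneg hB hHHp hH hHodge w hΔ'H hΔ'Hp
  rwa [twist_frame, discriminant_twist hB]

end HodgeIndex

/-- Under the Hodge-index property (`D·H = 0 → D·D ≤ 0`): (i) if
`ch = (x, y₁H + y₂H^⊥ + Δ, z)` with `x ≠ 0` is of Bogomolov type then
`F(ch) ≥ 0` and `F(e^L ch) ≥ 0` for every `L = l₁H + l₂H^⊥ + Δ_L`, so the
point `P(ch)` lies on or below the parabola `q = s²/2`; (ii) similarly for
rank `r ≠ 0` characters `ch'` and `F'`. -/
theorem bogomolov_type_F_nonneg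
    {N : Type*} [AddCommGroup N] [Module ℝ N]
    (B : N →ₗ[ℝ] N →ₗ[ℝ] ℝ) (hsymm : ∀ D D' : N, B D D' = B D' D)
    (H Hp : N) (hHHp : B H Hp = 0)
    (g δ w : ℝ) (hg : g = B H H) (hgpos : 0 < g) (hδ : δ = -(B Hp Hp))
    (hHodge : ∀ D : N, B D H = 0 → B D D ≤ 0) :
    (∀ (x y₁ y₂ z : ℝ) (Δ : N), B Δ H = 0 → B Δ Hp = 0 → x ≠ 0 →
      0 ≤ B (y₁ • H + y₂ • Hp + Δ) (y₁ • H + y₂ • Hp + Δ) - 2 * x * z →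
      0 ≤ Fval g δ w x y₁ y₂ z ∧
      (∀ (l₁ l₂ : ℝ) (ΔL : N), B ΔL H = 0 → B ΔL Hp = 0 →
        0 ≤ Fval g δ w x (y₁ + x * l₁) (y₂ + x * l₂)
          (z + B (l₁ • H + l₂ • Hp + ΔL) (y₁ • H + y₂ • Hp + Δ)
            + x / 2 * B (l₁ • H + l₂ • Hp + ΔL) (l₁ • H + l₂ • Hp + ΔL))) ∧
      ((y₁ / x) ^ 2 - Fval g δ w x y₁ y₂ z) / 2 ≤ (y₁ / x) ^ 2 / 2) ∧
    (∀ (r c₁ c₂ χ : ℝ) (Δ' : N), B Δ' H = 0 → B Δ' Hp = 0 → r ≠ 0 →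
      0 ≤ B (c₁ • H + c₂ • Hp + Δ') (c₁ • H + c₂ • Hp + Δ') - 2 * r * χ →
      0 ≤ F'val g δ w r c₁ c₂ χ ∧
      (∀ (l₁ l₂ : ℝ) (ΔL : N), B ΔL H = 0 → B ΔL Hp = 0 →
        0 ≤ F'val g δ w r (c₁ + r * l₁) (c₂ + r * l₂)
          (χ + B (l₁ • H + l₂ • Hp + ΔL) (c₁ • H + c₂ • Hp + Δ')
            + r / 2 * B (l₁ • H + l₂ • Hp + ΔL) (l₁ • H + l₂ • Hp + ΔL))) ∧
      ((c₁ / r) ^ 2 - F'val g δ w r c₁ c₂ χ) / 2 ≤ (c₁ / r) ^ 2 / 2) := by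
  subst hg hδ
  rw [F'val_eq_Fval, and_self_iff]
  intro x y₁ y₂ z Δ hΔH hΔHp _ hdisc
  have hF : 0 ≤ Fval (B H H) (-B Hp Hp) w x y₁ y₂ z :=
    Fval_nonneg_of_discriminant_nonneg hsymm hHHp hgpos.le hHodge w hΔH hΔHp hdisc
  refine ⟨hF, fun l₁ l₂ ΔL hΔLH hΔLHp => ?_, by linarith⟩
  exact Fval_twist_nonneg_of_discriminant_nonneg hsymm hHHp hgpos.le hHodge w hΔH hΔHp hdisc
    l₁ l₂ hΔLH hΔLHp
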